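/- arXiv:1505.04602 — 8 statements merged into one kernel-verified Lean document; each statement's English description precedes it below -/
import Mathlib

section
/- Let n ≥ 3 and let e₁, e₂, e₃ be three distinct unordered pairs of distinct vertices in Fin n. Then the three edges e₁, e₂, e₃ form a 3-cycle (i.e., there exist three distinct vertices x, y, z in Fin n such that {e₁, e₂, e₃} = {{x,y}, {y,z}, {x,z}}) if and only if χ(e₁) + χ(e₂) + χ(e₃) = 0 in (Fin (n-1) → ZMod 2). -/
/-- The coding vector of an unordered pair of vertices of `Fin n`:
for `e = {i,j}` with `i < j`, coordinate `k` is `1` iff `i ≤ k < j`. -/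
def chi (n : ℕ) : Sym2 (Fin n) → (Fin (n - 1) → ZMod 2) :=
  Sym2.lift ⟨fun i j k => if min i.val j.val ≤ k.val ∧ k.val < max i.val j.val then 1 else 0,
    fun i j => by funext k; dsimp only; rw [min_comm, max_comm]⟩

/-- `Cseg N` is the set of nonzero vectors of `Fin N → ZMod 2` whose support is an
interval of consecutive indices (the consecutive 1's property). -/
def Cseg (N : ℕ) : Set (Fin N → ZMod 2) :=
  {v | v ≠ 0 ∧ ∃ a b : ℕ, ∀ k : Fin N, v k = 1 ↔ a ≤ k.val ∧ k.val < b}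

/-- A finite set of vectors is reduced if it is nonempty and every nonempty proper
subset has nonzero sum. -/
def IsReducedSet {N : ℕ} (S : Finset (Fin N → ZMod 2)) : Prop :=
  S.Nonempty ∧ ∀ A : Finset (Fin N → ZMod 2), A ⊂ S → A.Nonempty → ∑ v ∈ A, v ≠ 0

/-!
Coordinate `k` of `χ(e)` counts, modulo 2, the endpoints of `e` beyond `k`, so coordinate `k` of
`∑ e ∈ E, χ(e)` is the sum modulo 2 of the degrees, with respect to `E`, of the vertices beyond `k`.
By the handshake lemma the degrees also have even total, and a function on a finite chain is
determined by its total and its sums over the proper upper tails; hence `∑ e ∈ E, χ(e) = 0` exactly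
when every degree is even. Suppose `E` has three edges, none of them a loop, and all degrees even.
An edge `xy` shares `x` with a second edge `xz`; the further edges that evenness requires at `y`
and at `z` can only be the one remaining edge, which is therefore `yz`.
-/

open Finset

section EvenEdgeSets

variable {V : Type*} [DecidableEq V]

/-- The degree of the vertex `v` in the graph with edge set `E`; a loop at `v` counts once. -/
def edgeDegree (E : Finset (Sym2 V)) (v : V) : ℕ := #{e ∈ E | v ∈ e}

theorem exists_mem_ne_of_even_edgeDegree {E : Finset (Sym2 V)} {v : V} (hv : Even (edgeDegree E v))
    {e : Sym2 V} (he : e ∈ E) (hve : v ∈ e) : ∃ f ∈ E, f ≠ e ∧ v ∈ f := by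
  have hpos : 0 < edgeDegree E v := card_pos.2 ⟨e, mem_filter.2 ⟨he, hve⟩⟩
  have hlt : 1 < edgeDegree E v := by grind
  obtain ⟨f, hf, hfe⟩ := exists_mem_ne hlt e
  exact ⟨f, (mem_filter.1 hf).1, hfe, (mem_filter.1 hf).2⟩

theorem even_edgeDegree_triangle {x y z : V} (hxy : x ≠ y) (hyz : y ≠ z) (hxz : x ≠ z) (v : V) :
    Even (edgeDegree {s(x, y), s(y, z), s(x, z)} v) := by
  have hyz_xz : s(y, z) ≠ s(x, z) := by grind
  by_cases hx : v = x <;> by_cases hy : v = y <;> by_cases hz : v = z <;>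
    simp_all [edgeDegree, filter_insert, filter_singleton]

theorem exists_triangle_of_forall_even_edgeDegree {E : Finset (Sym2 V)} (hcard : #E = 3)
    (hloop : ∀ e ∈ E, ¬ e.IsDiag) (heven : ∀ v, Even (edgeDegree E v)) :
    ∃ x y z, x ≠ y ∧ y ≠ z ∧ x ≠ z ∧ E = {s(x, y), s(y, z), s(x, z)} := by
  obtain ⟨e, he⟩ : E.Nonempty := card_pos.1 (by lia)
  induction e using Sym2.ind with | _ x y
  obtain ⟨f, hf, hfe, z, rfl⟩ :=
    exists_mem_ne_of_even_edgeDegree (heven x) he (Sym2.mem_mk_left x y)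
  have hxy : x ≠ y := hloop _ he
  have hxz : x ≠ z := hloop _ hf
  have hyz : y ≠ z := by rintro rfl; exact hfe rfl
  obtain ⟨g, hg, hge, hyg⟩ :=
    exists_mem_ne_of_even_edgeDegree (heven y) he (Sym2.mem_mk_right x y)
  obtain ⟨g', hg', hgf', hzg'⟩ :=
    exists_mem_ne_of_even_edgeDegree (heven z) hf (Sym2.mem_mk_right x z)
  have hgf : g ≠ s(x, z) := by rintro rfl; simp_all
  have hge' : g' ≠ s(x, y) := by rintro rfl; simp_all
  have hE : {s(x, y), g, s(x, z)} = E :=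
    eq_of_subset_of_card_le (by grind)
      (hcard.trans (card_eq_three.2 ⟨_, _, _, hge.symm, hfe.symm, hgf, rfl⟩).symm).le
  have hgg' : g' = g := by
    rw [← hE] at hg'
    simpa [hge', hgf'] using hg'
  have hgyz : g = s(y, z) := (Sym2.mem_and_mem_iff hyz).1 ⟨hyg, hgg' ▸ hzg'⟩
  exact ⟨x, y, z, hxy, hyz, hxz, by rw [← hE, hgyz]⟩

theorem forall_even_edgeDegree_iff_exists_triangle {E : Finset (Sym2 V)} (hcard : #E = 3)
    (hloop : ∀ e ∈ E, ¬ e.IsDiag) :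
    (∀ v, Even (edgeDegree E v)) ↔
      ∃ x y z, x ≠ y ∧ y ≠ z ∧ x ≠ z ∧ E = {s(x, y), s(y, z), s(x, z)} := by
  refine ⟨exists_triangle_of_forall_even_edgeDegree hcard hloop, ?_⟩
  rintro ⟨x, y, z, hxy, hyz, hxz, rfl⟩
  exact even_edgeDegree_triangle hxy hyz hxz

theorem sum_edgeDegree (E : Finset (Sym2 V)) (S : Finset V) :
    ∑ v ∈ S, edgeDegree E v = ∑ e ∈ E, #{v ∈ S | v ∈ e} :=
  sum_card_bipartiteAbove_eq_sum_card_bipartiteBelow _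

theorem sum_univ_edgeDegree [Fintype V] {E : Finset (Sym2 V)} (hloop : ∀ e ∈ E, ¬ e.IsDiag) :
    ∑ v, edgeDegree E v = 2 * #E := by
  have hends (e) (he : e ∈ E) : #{v | v ∈ e} = 2 := by
    rw [← Sym2.card_toFinset_of_not_isDiag e (hloop e he)]
    congr 1
    ext v
    simp
  rw [sum_edgeDegree, sum_congr rfl hends, sum_const, smul_eq_mul, mul_comm]

end EvenEdgeSets

theorem eq_zero_of_sum_eq_zero_of_sum_Ioi_eq_zero {α M : Type*} [LinearOrder α] [Fintype α]
    [LocallyFiniteOrderTop α] [AddCommMonoid M] {f : α → M} (hsum : ∑ a, f a = 0)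
    (htail : ∀ a, ∑ b ∈ Ioi a, f b = 0) : f = 0 := by
  funext a
  induction a using WellFoundedLT.induction with | _ a ih
  calc f a = f a + ∑ b ∈ Ioi a, f b := by rw [htail, add_zero]
    _ = ∑ b ∈ Ici a, f b := add_sum_Ioi_eq_sum_Ici a
    _ = ∑ b, f b := sum_subset (subset_univ _) fun b _ hb => ih b (by simpa using hb)
    _ = 0 := hsum

section Coding

variable {n : ℕ}

theorem chi_mk_apply (i j : Fin n) (k : Fin (n - 1)) :
    chi n s(i, j) k = (if k.val < i.val then 1 else 0) + (if k.val < j.val then 1 else 0) := by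
  simp only [chi, Sym2.lift_mk]
  split_ifs <;> first | lia | rfl

theorem chi_apply {e : Sym2 (Fin n)} (he : ¬ e.IsDiag) (k : Fin (n - 1)) :
    chi n e k = #{v ∈ Ioi (k.castLE (n.sub_le 1)) | v ∈ e} := by
  induction e using Sym2.ind with | _ i j
  have hends : {v ∈ Ioi (k.castLE (n.sub_le 1)) | v ∈ s(i, j)} =
      ({i, j} : Finset (Fin n)).filter fun v => k.val < v.val := by
    ext v
    simp [Fin.lt_def, and_comm]
  rw [hends, card_filter, sum_pair he, chi_mk_apply]
  push_cast
  rfl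

theorem sum_chi_apply {E : Finset (Sym2 (Fin n))} (hloop : ∀ e ∈ E, ¬ e.IsDiag)
    (k : Fin (n - 1)) :
    (∑ e ∈ E, chi n e) k = ∑ v ∈ Ioi (k.castLE (n.sub_le 1)), (edgeDegree E v : ZMod 2) := by
  rw [← Nat.cast_sum, sum_edgeDegree, Nat.cast_sum, Finset.sum_apply]
  exact sum_congr rfl fun e he => chi_apply (hloop e he) k

theorem sum_chi_eq_zero_iff_forall_even_edgeDegree {E : Finset (Sym2 (Fin n))}
    (hloop : ∀ e ∈ E, ¬ e.IsDiag) :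
    ∑ e ∈ E, chi n e = 0 ↔ ∀ v, Even (edgeDegree E v) := by
  simp only [← ZMod.natCast_eq_zero_iff_even]
  refine ⟨fun h => congrFun (eq_zero_of_sum_eq_zero_of_sum_Ioi_eq_zero ?_ fun v => ?_), fun h => ?_⟩
  · rw [← Nat.cast_sum, sum_univ_edgeDegree hloop, ZMod.natCast_eq_zero_iff_even]
    exact even_two_mul _
  · by_cases hv : v.val < n - 1
    · exact (sum_chi_apply hloop ⟨v, hv⟩).symm.trans (congrFun h _)
    · have hlast : Ioi v = ∅ := by
        ext w
        simp only [mem_Ioi, notMem_empty, iff_false]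
        lia
      rw [hlast, sum_empty]
  · funext k
    rw [sum_chi_apply hloop, sum_congr rfl fun v _ => h v, sum_const_zero, Pi.zero_apply]

end Coding

theorem stmt0 (n : ℕ) (hn : 3 ≤ n) (e₁ e₂ e₃ : Sym2 (Fin n))
    (h₁ : ¬ e₁.IsDiag) (h₂ : ¬ e₂.IsDiag) (h₃ : ¬ e₃.IsDiag)
    (h₁₂ : e₁ ≠ e₂) (h₁₃ : e₁ ≠ e₃) (h₂₃ : e₂ ≠ e₃) :
    (∃ x y z : Fin n, x ≠ y ∧ y ≠ z ∧ x ≠ z ∧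
        ({e₁, e₂, e₃} : Set (Sym2 (Fin n))) = {s(x, y), s(y, z), s(x, z)}) ↔
      chi n e₁ + chi n e₂ + chi n e₃ = 0 := by
  have hcard : #{e₁, e₂, e₃} = 3 := card_eq_three.2 ⟨e₁, e₂, e₃, h₁₂, h₁₃, h₂₃, rfl⟩
  have hloop : ∀ e ∈ ({e₁, e₂, e₃} : Finset (Sym2 (Fin n))), ¬ e.IsDiag := by
    simp only [mem_insert, mem_singleton]
    rintro e (rfl | rfl | rfl) <;> assumption
  have hsum : chi n e₁ + chi n e₂ + chi n e₃ = ∑ e ∈ {e₁, e₂, e₃}, chi n e := by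
    rw [sum_insert (by simp [h₁₂, h₁₃]), sum_pair h₂₃, add_assoc]
  rw [hsum, sum_chi_eq_zero_iff_forall_even_edgeDegree hloop,
    forall_even_edgeDegree_iff_exists_triangle hcard hloop]
  simp only [← coe_inj, coe_insert, coe_singleton]
end

section
/- Let 3 ≤ k ≤ n and let S be a set of k distinct unordered pairs of distinct vertices in Fin n. Then the edges in S form a k-cycle (i.e., there is a cycle walk in the complete graph on Fin n of length k whose edge set is exactly S) if and only if the set {χ(e) : e ∈ S} is reduced and ∑_{e ∈ S} χ(e) = 0. -/
/-!
Coordinate `k` of `χ(e)` says whether `e` crosses the cut separating `{0, …, k}` from the remaining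
vertices. The indicators of these initial segments span all functions `Fin n → ZMod 2`, so
`∑ e ∈ A, χ(e) = 0` means that `A` meets every cut an even number of times, i.e. that `A` lies in
the binary cycle space. It remains to see that the minimal nonempty members of the cycle space are
the edge sets of cycles. If the graph with edge set `A ≠ ∅` were acyclic, the cut given by a
component after the deletion of a bridge would meet `A` in that bridge only; so every nonempty
member contains a cycle. Conversely, a path contains no nonempty member, since the cut around its
endpoint contains only one of its edges, so that the edges drop out one after the other; but of a
proper nonempty member inside a cycle and its complement in the cycle, one avoids the first edge and
hence lies in a path.
-/

open SimpleGraph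

section Coboundary

variable {V : Type*}

/-- The coboundary over `ZMod 2`: it takes `f` to the function `s(i, j) ↦ f i + f j`. If `f` is the
indicator of a vertex set, this is the indicator of the cut that the set defines. -/
def coboundary : (V → ZMod 2) →ₗ[ZMod 2] (Sym2 V → ZMod 2) where
  toFun f := Sym2.lift ⟨fun i j => f i + f j, fun i j => add_comm (f i) (f j)⟩
  map_add' f g := by
    ext ⟨i, j⟩
    exact add_add_add_comm (f i) (g i) (f j) (g j)
  map_smul' c f := by
    ext ⟨i, j⟩
    exact (mul_add c (f i) (f j)).symm

theorem coboundary_mk (f : V → ZMod 2) (i j : V) : coboundary f s(i, j) = f i + f j := rfl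

theorem coboundary_mk_eq_zero_iff {f : V → ZMod 2} {i j : V} :
    coboundary f s(i, j) = 0 ↔ f i = f j :=
  CharTwo.add_eq_zero

theorem coboundary_one : coboundary (1 : V → ZMod 2) = 0 := by
  ext ⟨i, j⟩
  exact coboundary_mk_eq_zero_iff.2 rfl

theorem sum_map_coboundary_edges {G : SimpleGraph V} {u v : V} (w : G.Walk u v)
    (f : V → ZMod 2) : (w.edges.map (coboundary f)).sum = f u + f v := by
  induction w with
  | nil => exact (CharTwo.add_self_eq_zero _).symm
  | @cons a b c _ p ih =>
    rw [Walk.edges_cons, List.map_cons, List.sum_cons, ih, coboundary_mk, add_assoc,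
      CharTwo.add_cancel_left]

end Coboundary

section CycleSpace

variable {V : Type*} {A B : Finset (Sym2 V)}

/-- Membership in the cycle space over `ZMod 2`: the edge set `A` is orthogonal to every cut.
For finitely many vertices this is the usual condition that all degrees are even, see
`inCycleSpace_iff_forall_single`. Loops lie in no cut, so they are unconstrained. -/
def InCycleSpace (A : Finset (Sym2 V)) : Prop :=
  ∀ f : V → ZMod 2, ∑ e ∈ A, coboundary f e = 0

theorem inCycleSpace_iff_forall_single [Finite V] [DecidableEq V] :
    InCycleSpace A ↔ ∀ v, ∑ e ∈ A, coboundary (Pi.single v 1) e = 0 := by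
  refine ⟨fun hA v => hA _, fun hA f => ?_⟩
  have := Fintype.ofFinite V
  calc ∑ e ∈ A, coboundary f e
      = ∑ e ∈ A, ∑ v, f v * coboundary (Pi.single v 1) e := by
        refine Finset.sum_congr rfl fun e _ => ?_
        conv_lhs => rw [pi_eq_sum_univ' f]
        simp only [map_sum, map_smul, Finset.sum_apply, Pi.smul_apply, smul_eq_mul]
    _ = ∑ v, f v * ∑ e ∈ A, coboundary (Pi.single v 1) e := by
        simp only [Finset.mul_sum]
        exact Finset.sum_comm
    _ = 0 := by simp only [hA, mul_zero, Finset.sum_const_zero]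

theorem InCycleSpace.coboundary_eq_zero (hA : InCycleSpace A) {e : Sym2 V} (he : e ∈ A)
    {f : V → ZMod 2} (hf : ∀ e' ∈ A, e' ≠ e → coboundary f e' = 0) : coboundary f e = 0 :=
  (Finset.sum_eq_single_of_mem e he hf).symm.trans (hA f)

theorem InCycleSpace.sdiff [DecidableEq V] (hB : InCycleSpace B) (hA : InCycleSpace A)
    (hAB : A ⊆ B) : InCycleSpace (B \ A) := fun f => by
  rw [Finset.sum_sdiff_eq_sub hAB, hB f, hA f, sub_zero]

theorem InCycleSpace.not_isAcyclic (hA : InCycleSpace A) (hne : A.Nonempty)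
    (hdiag : ∀ e ∈ A, ¬ e.IsDiag) : ¬ (fromEdgeSet (A : Set (Sym2 V))).IsAcyclic := by
  classical
  intro hacyclic
  have adj_of_mem {a b : V} (h : s(a, b) ∈ A) : (fromEdgeSet (A : Set (Sym2 V))).Adj a b :=
    ⟨h, fun hab => hdiag _ h (Sym2.mk_isDiag_iff.2 hab)⟩
  obtain ⟨⟨x, y⟩, he⟩ := hne
  set H := (fromEdgeSet (A : Set (Sym2 V))).deleteEdges {s(x, y)}
  have hbridge : ¬ H.Reachable x y :=
    isBridge_iff.1 (isAcyclic_iff_forall_adj_isBridge.1 hacyclic (adj_of_mem he))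
  let component : V → ZMod 2 := fun z => if H.Reachable x z then 1 else 0
  have hcut : component x = component y := by
    refine coboundary_mk_eq_zero_iff.1 (hA.coboundary_eq_zero he ?_)
    rintro ⟨a, b⟩ hab hne
    have hadj : H.Adj a b := deleteEdges_adj.2 ⟨adj_of_mem hab, hne⟩
    have hiff : H.Reachable x a ↔ H.Reachable x b :=
      ⟨fun h => h.trans hadj.reachable, fun h => h.trans hadj.symm.reachable⟩
    exact coboundary_mk_eq_zero_iff.2 (if_congr hiff rfl rfl)
  simp [component, hbridge] at hcut

theorem InCycleSpace.exists_isCycle_edges_subset [DecidableEq V] (hA : InCycleSpace A)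
    (hne : A.Nonempty) (hdiag : ∀ e ∈ A, ¬ e.IsDiag) :
    ∃ (v : V) (w : (⊤ : SimpleGraph V).Walk v v), w.IsCycle ∧ w.edges.toFinset ⊆ A := by
  have hcycle := hA.not_isAcyclic hne hdiag
  simp only [IsAcyclic, not_forall, not_not] at hcycle
  obtain ⟨v, w, hw⟩ := hcycle
  refine ⟨v, w.mapLe le_top, hw.mapLe le_top, fun e he => ?_⟩
  rw [List.mem_toFinset, Walk.edges_mapLe_eq_edges] at he
  have hmem := w.edges_subset_edgeSet he
  rw [edgeSet_fromEdgeSet] at hmem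
  exact hmem.1

theorem card_edges_toFinset_of_isTrail [DecidableEq V] {G : SimpleGraph V} {u v : V}
    {w : G.Walk u v} (hw : w.IsTrail) : w.edges.toFinset.card = w.length := by
  rw [List.toFinset_card_of_nodup hw.edges_nodup, Walk.length_edges]

theorem InCycleSpace.three_le_card (hA : InCycleSpace A) (hne : A.Nonempty)
    (hdiag : ∀ e ∈ A, ¬ e.IsDiag) : 3 ≤ A.card := by
  classical
  obtain ⟨v, w, hw, hwA⟩ := hA.exists_isCycle_edges_subset hne hdiag
  calc 3 ≤ w.length := hw.three_le_length
    _ = w.edges.toFinset.card := (card_edges_toFinset_of_isTrail hw.isTrail).symm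
    _ ≤ A.card := Finset.card_le_card hwA

variable [DecidableEq V]

theorem inCycleSpace_edges_toFinset {G : SimpleGraph V} {u : V} {w : G.Walk u u}
    (hw : w.IsTrail) : InCycleSpace w.edges.toFinset := fun f => by
  rw [List.sum_toFinset _ hw.edges_nodup, sum_map_coboundary_edges, CharTwo.add_self_eq_zero]

theorem InCycleSpace.eq_empty_of_subset_edges_of_isPath (hA : InCycleSpace A)
    {G : SimpleGraph V} {u v : V} {p : G.Walk u v} (hp : p.IsPath)
    (hsub : A ⊆ p.edges.toFinset) : A = ∅ := by
  induction p with
  | nil => exact Finset.subset_empty.1 hsub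
  | @cons a b c hab q ih =>
    obtain ⟨hq, ha⟩ := (Walk.cons_isPath_iff hab q).1 hp
    rw [Walk.edges_cons, List.toFinset_cons] at hsub
    have hnotMem : s(a, b) ∉ A := fun he => by
      have hcut : coboundary (Pi.single a 1) s(a, b) = 0 := by
        refine hA.coboundary_eq_zero he ?_
        rintro ⟨x, y⟩ hxy hne
        have hmem := List.mem_toFinset.1 (Finset.mem_of_mem_insert_of_ne (hsub hxy) hne)
        have hx : x ≠ a := fun h => ha (h ▸ q.fst_mem_support_of_mem_edges hmem)
        have hy : y ≠ a := fun h => ha (h ▸ q.snd_mem_support_of_mem_edges hmem)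
        rw [coboundary_mk, Pi.single_eq_of_ne hx, Pi.single_eq_of_ne hy, add_zero]
      rw [coboundary_mk, Pi.single_eq_same, Pi.single_eq_of_ne hab.ne', add_zero] at hcut
      exact one_ne_zero hcut
    exact ih hq ((Finset.subset_insert_iff_of_notMem hnotMem).1 hsub)

theorem InCycleSpace.edges_subset_of_isCycle (hA : InCycleSpace A) (hne : A.Nonempty)
    {G : SimpleGraph V} {u : V} {w : G.Walk u u} (hw : w.IsCycle)
    (hsub : A ⊆ w.edges.toFinset) : w.edges.toFinset ⊆ A := by
  have hw' := inCycleSpace_edges_toFinset hw.isTrail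
  cases w with
  | nil => exact absurd Walk.Nil.nil hw.not_nil
  | @cons _ b _ h p =>
    have hp : p.IsPath := ((Walk.cons_isCycle_iff p h).1 hw).1
    rw [Walk.edges_cons, List.toFinset_cons] at hsub hw' ⊢
    by_cases hfirst : s(u, b) ∈ A
    · refine Finset.sdiff_eq_empty_iff_subset.1
        ((hw'.sdiff hA hsub).eq_empty_of_subset_edges_of_isPath hp ?_)
      rw [Finset.insert_sdiff_of_mem _ hfirst]
      exact Finset.sdiff_subset
    · have hempty := hA.eq_empty_of_subset_edges_of_isPath hp
        ((Finset.subset_insert_iff_of_notMem hfirst).1 hsub)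
      exact absurd hempty hne.ne_empty

theorem exists_isCycle_edges_eq_iff_minimal {S : Finset (Sym2 V)}
    (hdiag : ∀ e ∈ S, ¬ e.IsDiag) :
    (∃ (v : V) (w : (⊤ : SimpleGraph V).Walk v v), w.IsCycle ∧ w.edges.toFinset = S) ↔
      Minimal (fun A => A.Nonempty ∧ InCycleSpace A) S := by
  have edges_nonempty {v : V} {w : (⊤ : SimpleGraph V).Walk v v} (hw : w.IsCycle) :
      w.edges.toFinset.Nonempty := by
    rw [← Finset.card_pos, card_edges_toFinset_of_isTrail hw.isTrail]
    exact Nat.zero_lt_of_lt hw.three_le_length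
  constructor
  · rintro ⟨v, w, hw, rfl⟩
    exact ⟨⟨edges_nonempty hw, inCycleSpace_edges_toFinset hw.isTrail⟩,
      fun A hA hsub => hA.2.edges_subset_of_isCycle hA.1 hw hsub⟩
  · intro hmin
    obtain ⟨v, w, hw, hsub⟩ := hmin.prop.2.exists_isCycle_edges_subset hmin.prop.1 hdiag
    exact ⟨v, w, hw, hmin.eq_of_le ⟨edges_nonempty hw, inCycleSpace_edges_toFinset hw.isTrail⟩ hsub⟩

end CycleSpace

section Coding

variable {n : ℕ}

/-- The indicator of the initial segment `{0, …, m - 1}` of `Fin n`, where `m` is not bounded by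
`n`; the cuts of these segments are the coordinates of `chi`. -/
def initialSegment (n m : ℕ) : Fin n → ZMod 2 := fun i => if i.val < m then 1 else 0

theorem initialSegment_zero : initialSegment n 0 = 0 := by
  ext i
  exact if_neg (Nat.not_lt_zero _)

theorem initialSegment_of_le {m : ℕ} (h : n ≤ m) : initialSegment n m = 1 := by
  ext i
  exact if_pos (i.isLt.trans_le h)

theorem single_eq_initialSegment_add (v : Fin n) :
    Pi.single v 1 = initialSegment n (v + 1) + initialSegment n v := by
  ext i
  simp only [Pi.single_apply, Pi.add_apply, initialSegment, Fin.ext_iff]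
  split_ifs <;> first | omega | rfl

theorem chi_apply_eq_coboundary (e : Sym2 (Fin n)) (k : Fin (n - 1)) :
    chi n e k = coboundary (initialSegment n (k + 1)) e := by
  induction e with | _ i j =>
  simp only [chi, Sym2.lift_mk, coboundary_mk, initialSegment]
  split_ifs <;> first | omega | rfl

theorem sum_chi_eq_zero_iff {A : Finset (Sym2 (Fin n))} :
    ∑ e ∈ A, chi n e = 0 ↔ InCycleSpace A := by
  have sum_chi_apply (k : Fin (n - 1)) :
      (∑ e ∈ A, chi n e) k = ∑ e ∈ A, coboundary (initialSegment n (k + 1)) e := by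
    simp only [Finset.sum_apply, chi_apply_eq_coboundary]
  refine ⟨fun h => ?_, fun hA => funext fun k => (sum_chi_apply k).trans (hA _)⟩
  have hsegment (m : ℕ) : ∑ e ∈ A, coboundary (initialSegment n m) e = 0 := by
    obtain rfl | hpos := m.eq_zero_or_pos
    · simp only [initialSegment_zero, map_zero, Pi.zero_apply, Finset.sum_const_zero]
    obtain hm | hm := le_or_gt n m
    · simp only [initialSegment_of_le hm, coboundary_one, Pi.zero_apply, Finset.sum_const_zero]
    · have hcoord := sum_chi_apply ⟨m - 1, by omega⟩
      rwa [h, Nat.sub_add_cancel hpos, Pi.zero_apply, eq_comm] at hcoord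
  refine inCycleSpace_iff_forall_single.2 fun v => ?_
  simp only [single_eq_initialSegment_add, map_add, Pi.add_apply, Finset.sum_add_distrib,
    hsegment, add_zero]

theorem injOn_chi : Set.InjOn (chi n) {e | ¬ e.IsDiag} := by
  intro e he e' he' heq
  by_contra hne
  have hpair : InCycleSpace {e, e'} := by
    rw [← sum_chi_eq_zero_iff, Finset.sum_pair hne, heq]
    exact funext fun _ => CharTwo.add_self_eq_zero _
  have hcard : 3 ≤ ({e, e'} : Finset (Sym2 (Fin n))).card :=
    hpair.three_le_card (Finset.insert_nonempty _ _) (by simpa using ⟨he, he'⟩)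
  rw [Finset.card_pair hne] at hcard
  omega

end Coding

theorem isReducedSet_image_and_sum_eq_zero_iff_minimal {ι : Type*} {N : ℕ}
    {f : ι → Fin N → ZMod 2} {S : Finset ι} (hf : Set.InjOn f S) :
    (IsReducedSet (S.image f) ∧ ∑ i ∈ S, f i = 0) ↔
      Minimal (fun A : Finset ι => A.Nonempty ∧ ∑ i ∈ A, f i = 0) S := by
  have sum_image {A : Finset ι} (hA : A ⊆ S) : ∑ v ∈ A.image f, v = ∑ i ∈ A, f i :=
    Finset.sum_image (hf.mono hA)
  have image_ssubset {A : Finset ι} (hA : A ⊆ S) : A.image f ⊂ S.image f ↔ A ⊂ S := by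
    rw [← Finset.coe_ssubset, Finset.coe_image, Finset.coe_image,
      hf.image_ssubset_image_iff hA subset_rfl, Finset.coe_ssubset]
  rw [minimal_iff_forall_lt]
  constructor
  · rintro ⟨⟨hne, hred⟩, hsum⟩
    refine ⟨⟨Finset.image_nonempty.1 hne, hsum⟩, fun A hA hzero => ?_⟩
    exact hred _ ((image_ssubset hA.le).2 hA) (hzero.1.image f) ((sum_image hA.le).trans hzero.2)
  · rintro ⟨⟨hne, hsum⟩, hmin⟩
    refine ⟨⟨hne.image f, fun B hB hBne hzero => ?_⟩, hsum⟩
    obtain ⟨A, hA, rfl⟩ := Finset.subset_image_iff.1 hB.subset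
    exact hmin ((image_ssubset hA).1 hB)
      ⟨Finset.image_nonempty.1 hBne, (sum_image hA).symm.trans hzero⟩

theorem stmt1 (n k : ℕ) (hk : 3 ≤ k) (hkn : k ≤ n)
    (S : Finset (Sym2 (Fin n))) (hdiag : ∀ e ∈ S, ¬ e.IsDiag) (hcard : S.card = k) :
    (∃ (v : Fin n) (w : (⊤ : SimpleGraph (Fin n)).Walk v v),
        w.IsCycle ∧ w.length = k ∧ w.edges.toFinset = S) ↔
      (IsReducedSet (S.image (chi n)) ∧ ∑ e ∈ S, chi n e = 0) := by
  rw [isReducedSet_image_and_sum_eq_zero_iff_minimal (injOn_chi.mono hdiag)]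
  simp only [sum_chi_eq_zero_iff]
  rw [← exists_isCycle_edges_eq_iff_minimal hdiag]
  refine exists_congr fun v => exists_congr fun w => and_congr_right fun hw =>
    and_iff_right_of_imp fun hedges => ?_
  rw [← card_edges_toFinset_of_isTrail hw.isTrail, hedges, hcard]
end

section
/- Let n ≥ 2 and let G be a simple graph on Fin n. Then G is acyclic (contains no cycle) if and only if the family of vectors (χ(e))_{e ∈ E(G)}, indexed by the edge set of G, is linearly independent over ZMod 2 in (Fin (n-1) → ZMod 2). -/
/-!
Writing `y i` for the indicator of the coordinates below `i`, one has `χ {i, j} = y i + y j` modulo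
`2`, and the vectors `y i` are affinely (not linearly: `y 0 = 0`) independent. Only this matters.
Along a walk the edge vectors telescope, so an edge of a cycle has its vector in the span of the
vectors of the other edges. Conversely, the two sides of a bridge are separated by a linear form on
formal combinations of vertices which vanishes on every edge but the bridge; affine independence
transports the resulting independence of formal edge vectors to the given ones, because in
characteristic `2` the coefficients of a formal edge vector sum to zero.
-/

open SimpleGraph Submodule

theorem disjoint_ker_linearCombination_of_affineIndependent {V R M : Type*} [Ring R]
    [AddCommGroup M] [Module R M] {x : V → M} (hx : AffineIndependent R x) :
    Disjoint (Finsupp.linearCombination R (1 : V → R)).ker (Finsupp.linearCombination R x).ker := by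
  rw [disjoint_def]
  intro w weight_eq_zero comb_eq_zero
  have coeff_eq_zero := affineIndependent_iff.1 hx w.support w
    (by simpa [Finsupp.linearCombination_apply, Finsupp.sum] using weight_eq_zero) comb_eq_zero
  ext v
  by_contra hv
  exact hv (coeff_eq_zero v (Finsupp.mem_support_iff.2 hv))

/-- The vector `x i + x j` that a labelling `x` of the vertices by vectors assigns to the unordered
pair `{i, j}`. In characteristic `2` this is the difference of the two labels, so that no
orientation of the edges has to be chosen. -/
def edgeSum {V M : Type*} [AddCommMonoid M] (x : V → M) (e : Sym2 V) : M :=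
  (e.map x).add

section EdgeSum

variable {V R M : Type*}

@[simp]
theorem edgeSum_mk [AddCommMonoid M] (x : V → M) (i j : V) : edgeSum x s(i, j) = x i + x j :=
  rfl

theorem linearCombination_edgeSum_single (R : Type*) [Semiring R] [AddCommMonoid M] [Module R M]
    (x : V → M) (e : Sym2 V) :
    Finsupp.linearCombination R x (edgeSum (fun v => Finsupp.single v 1) e) = edgeSum x e := by
  induction e with
  | h i j => simp only [edgeSum_mk, map_add, Finsupp.linearCombination_single, one_smul]

theorem edgeSum_mem_span_of_reachable (R : Type*) [Ring R] [CharP R 2] [AddCommGroup M] [Module R M]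
    (x : V → M) {G : SimpleGraph V} {u v : V} (h : G.Reachable u v) :
    edgeSum x s(u, v) ∈ span R (edgeSum x '' G.edgeSet) := by
  have add_self (m : M) : m + m = 0 := by rw [← two_smul R m, CharTwo.two_eq_zero, zero_smul]
  obtain ⟨p⟩ := h
  induction p with
  | nil => simp only [edgeSum_mk, add_self, zero_mem]
  | @cons a b c hab _ ih =>
    have telescope : edgeSum x s(a, b) + edgeSum x s(b, c) = edgeSum x s(a, c) := by
      rw [edgeSum_mk, edgeSum_mk, edgeSum_mk, add_assoc, ← add_assoc (x b), add_self, zero_add]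
    rw [← telescope]
    exact add_mem (subset_span ⟨s(a, b), hab, rfl⟩) ih

theorem isAcyclic_of_linearIndepOn_edgeSum [Ring R] [CharP R 2] [AddCommGroup M] [Module R M]
    {x : V → M} {G : SimpleGraph V} (h : LinearIndepOn R (edgeSum x) G.edgeSet) :
    G.IsAcyclic := by
  have : Nontrivial R := CharP.nontrivial_of_char_ne_one (v := 2) (by decide)
  rw [isAcyclic_iff_forall_isBridge]
  intro e he
  induction e with
  | h u v =>
    intro hreach
    have hmem := edgeSum_mem_span_of_reachable R x hreach
    rw [edgeSet_deleteEdges] at hmem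
    exact h.notMem_span he hmem

theorem exists_edgeSum_eq_one_of_isBridge (R : Type*) [Ring R] [CharP R 2] {G : SimpleGraph V}
    {e : Sym2 V} (he : G.IsBridge e) :
    ∃ f : V → R, edgeSum f e = 1 ∧ ∀ e' ∈ G.edgeSet, e' ≠ e → edgeSum f e' = 0 := by
  classical
  induction e with
  | h u v =>
    let H := G.deleteEdges {s(u, v)}
    refine ⟨fun w => if H.Reachable u w then 1 else 0, ?_, fun e' he' hne => ?_⟩
    · rw [edgeSum_mk, if_pos (Reachable.refl u), if_neg he, add_zero]
    · induction e' with
      | h i j =>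
        have hadj : H.Adj i j := (deleteEdges_adj ..).2 ⟨he', hne⟩
        have same_side : H.Reachable u i ↔ H.Reachable u j :=
          ⟨(·.trans hadj.reachable), (·.trans hadj.symm.reachable)⟩
        simp only [edgeSum_mk, same_side, CharTwo.add_self_eq_zero]

theorem linearIndepOn_edgeSum_single (R : Type*) [CommRing R] [CharP R 2] {G : SimpleGraph V}
    (hG : G.IsAcyclic) :
    LinearIndepOn R (edgeSum fun v : V => Finsupp.single v (1 : R)) G.edgeSet := by
  rw [isAcyclic_iff_forall_isBridge] at hG
  choose f f_self f_other using fun e : G.edgeSet => exists_edgeSum_eq_one_of_isBridge R (hG e.2)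
  refine .of_pairwise_dual_eq_zero_one _ (fun e => Finsupp.linearCombination R (f e)) ?_ ?_
  · intro e e' hne
    rw [linearCombination_edgeSum_single, f_other e e' e'.2 (Subtype.coe_ne_coe.2 hne.symm)]
  · intro e
    rw [linearCombination_edgeSum_single, f_self]

theorem linearIndepOn_edgeSum_of_isAcyclic [CommRing R] [CharP R 2] [AddCommGroup M] [Module R M]
    {x : V → M} (hx : AffineIndependent R x) {G : SimpleGraph V} (hG : G.IsAcyclic) :
    LinearIndepOn R (edgeSum x) G.edgeSet := by
  let δ : V → V →₀ R := fun v => Finsupp.single v 1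
  have span_le_weight_zero : span R (Set.range fun e : G.edgeSet => edgeSum δ e) ≤
      (Finsupp.linearCombination R (1 : V → R)).ker := by
    rw [span_le]
    rintro _ ⟨⟨⟨i, j⟩, -⟩, rfl⟩
    exact (linearCombination_edgeSum_single R 1 s(i, j)).trans (CharTwo.add_self_eq_zero (1 : R))
  have image_independent := (linearIndepOn_edgeSum_single R hG).map
    ((disjoint_ker_linearCombination_of_affineIndependent hx).mono_left span_le_weight_zero)
  simpa only [LinearIndepOn, Function.comp_def, linearCombination_edgeSum_single]
    using image_independent

theorem stmt3_general [CommRing R] [CharP R 2] [AddCommGroup M] [Module R M]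
    {x : V → M} (hx : AffineIndependent R x) (G : SimpleGraph V) :
    G.IsAcyclic ↔ LinearIndependent R (fun e : G.edgeSet => edgeSum x e) :=
  ⟨linearIndepOn_edgeSum_of_isAcyclic hx, isAcyclic_of_linearIndepOn_edgeSum⟩

end EdgeSum

/-- The indicator vector of the coordinates below `i`; over `ZMod 2`, the sums of two of these are
the vectors `chi`. -/
def initialVec (R : Type*) [Zero R] [One R] (n : ℕ) (i : Fin n) : Fin (n - 1) → R :=
  fun k => if k.val < i.val then 1 else 0

theorem chi_eq_edgeSum_initialVec (n : ℕ) : chi n = edgeSum (initialVec (ZMod 2) n) := by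
  have one_add_one : (1 : ZMod 2) + 1 = 0 := by decide
  funext e k
  induction e with
  | h i j =>
    simp only [chi, Sym2.lift_mk, edgeSum_mk, initialVec, Pi.add_apply]
    split_ifs <;> first | omega | simp [one_add_one]

theorem affineIndependent_initialVec (R : Type*) [Ring R] (n : ℕ) :
    AffineIndependent R (initialVec R n) := by
  rw [affineIndependent_iff_of_fintype]
  intro w weight_eq_zero comb_eq_zero i
  rw [Finset.univ.weightedVSub_eq_linear_combination weight_eq_zero] at comb_eq_zero
  -- Coordinate `k` of `∑ j, w j • initialVec R n j` is the sum of the weights with index above `k`.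
  have tail_eq_zero (m : ℕ) : ∑ j : Fin n with m ≤ j.val, w j = 0 := by
    rcases m with _ | k
    · simpa using weight_eq_zero
    rcases lt_or_ge k (n - 1) with hk | hk
    · simpa [initialVec, Finset.sum_filter, Nat.succ_le_iff] using congrFun comb_eq_zero ⟨k, hk⟩
    · exact Finset.sum_eq_zero fun j hj => by grind
  have split_tail : ∑ j : Fin n with i.val ≤ j.val, w j
      = w i + ∑ j : Fin n with i.val + 1 ≤ j.val, w j := by
    rw [← Finset.sum_insert (by simp)]
    congr 1
    ext j
    simp only [Finset.mem_filter, Finset.mem_univ, true_and, Finset.mem_insert, Fin.ext_iff]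
    omega
  simpa only [tail_eq_zero, add_zero, eq_comm] using split_tail

theorem stmt3 (n : ℕ) (hn : 2 ≤ n) (G : SimpleGraph (Fin n)) :
    G.IsAcyclic ↔
      LinearIndependent (ZMod 2) (fun e : G.edgeSet => chi n e.val) := by
  rw [chi_eq_edgeSum_initialVec]
  exact stmt3_general (affineIndependent_initialVec (ZMod 2) n) G
end

section
/- Let n ≥ 2 and let G be a simple graph on Fin n. Then G is bipartite (2-colorable) if and only if for every subset S of the edge set of G with |S| odd, ∑_{e ∈ S} χ(e) ≠ 0 in (Fin (n-1) → ZMod 2). -/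
/-!
The coding vector of an edge is the sum of labels attached to its two ends, the labels being
affinely independent over `ZMod 2`. Along a closed walk such sums telescope to zero, so an odd
closed walk, with its edges counted mod 2, leaves an odd set of edges with zero sum. Conversely, if
a set `S` of edges has zero sum, affine independence forces every vertex to have even degree in `S`,
so the endpoint sums over `S` vanish for every other labelling too. For a proper coloring with
values in `ZMod 2` each edge contributes `1`, hence `S` has even cardinality.
-/

/-- The sum of the labels of the two ends of an unordered pair. In characteristic two it is the
coboundary of the vertex labelling `w`. -/
def endpointSum {V M : Type*} [AddCommMonoid M] (w : V → M) : Sym2 V → M :=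
  Sym2.lift ⟨fun u v => w u + w v, fun _ _ => add_comm _ _⟩

section EndpointSum

variable {V M N : Type*} [AddCommMonoid M] [AddCommMonoid N]

@[simp]
lemma endpointSum_mk (w : V → M) (u v : V) : endpointSum w s(u, v) = w u + w v := rfl

lemma map_endpointSum {F : Type*} [FunLike F M N] [AddMonoidHomClass F M N] (f : F) (w : V → M)
    (e : Sym2 V) : f (endpointSum w e) = endpointSum (f ∘ w) e := by
  induction e with | _ u v
  simp

end EndpointSum

lemma finsupp_eq_zero_of_affineIndependent {R V M : Type*} [Ring R] [AddCommGroup M] [Module R M]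
    {w : V → M} (hw : AffineIndependent R w) {D : V →₀ R} (hsum : D.sum (fun _ r => r) = 0)
    (hcomb : Finsupp.linearCombination R w D = 0) : D = 0 := by
  ext v
  by_contra hv
  exact hv (hw.eq_zero_of_sum_eq_zero hsum hcomb v (Finsupp.mem_support_iff.2 hv))

lemma linearCombination_sum_endpointSum_single (R : Type*) {V M : Type*} [Semiring R]
    [AddCommMonoid M] [Module R M] (S : Finset (Sym2 V)) (w : V → M) :
    Finsupp.linearCombination R w (∑ e ∈ S, endpointSum (fun v => Finsupp.single v 1) e) =
      ∑ e ∈ S, endpointSum w e := by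
  simp only [map_sum, map_endpointSum, Function.comp_def, Finsupp.linearCombination_single,
    one_smul]

section CharTwo

variable {V M N : Type*} [AddCommGroup M] [Module (ZMod 2) M] [AddCommGroup N] [Module (ZMod 2) N]
variable {G : SimpleGraph V}

lemma sum_endpointSum_eq_zero_of_affineIndependent {w : V → M}
    (hw : AffineIndependent (ZMod 2) w) {S : Finset (Sym2 V)} (hS : ∑ e ∈ S, endpointSum w e = 0)
    (c : V → N) : ∑ e ∈ S, endpointSum c e = 0 := by
  -- `D v` is the degree mod 2 of `v` in the graph with edge set `S`.
  let D : V →₀ ZMod 2 := ∑ e ∈ S, endpointSum (fun v => Finsupp.single v 1) e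
  have hsum : D.sum (fun _ r => r) = 0 := by
    have hone : Finsupp.linearCombination (ZMod 2) (fun _ => (1 : ZMod 2)) D = 0 := by
      rw [linearCombination_sum_endpointSum_single]
      refine Finset.sum_eq_zero fun e _ => ?_
      induction e with | _ u v
      exact ZModModule.add_self 1
    simpa only [Finsupp.linearCombination_apply, smul_eq_mul, mul_one] using hone
  have hcomb : Finsupp.linearCombination (ZMod 2) w D = 0 := by
    rwa [linearCombination_sum_endpointSum_single]
  have hD : D = 0 := finsupp_eq_zero_of_affineIndependent hw hsum hcomb
  calc
    ∑ e ∈ S, endpointSum c e = Finsupp.linearCombination (ZMod 2) c D :=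
      (linearCombination_sum_endpointSum_single _ S c).symm
    _ = 0 := by rw [hD, map_zero]

lemma endpointSum_coloring_eq_one (c : G.Coloring (ZMod 2)) {e : Sym2 V} (he : e ∈ G.edgeSet) :
    endpointSum c e = 1 := by
  have add_eq_one_of_ne : ∀ a b : ZMod 2, a ≠ b → a + b = 1 := by decide
  induction e with | _ u v
  exact add_eq_one_of_ne _ _ (c.valid he)

lemma sum_filter_odd_count {α : Type*} [DecidableEq α] (l : List α) (f : α → M) :
    ∑ a ∈ l.toFinset with Odd (l.count a), f a = (l.map f).sum := by
  rw [Finset.sum_list_map_count, Finset.sum_filter]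
  refine Finset.sum_congr rfl fun a _ => ?_
  rw [← Nat.cast_smul_eq_nsmul (ZMod 2)]
  split_ifs with h
  · rw [ZMod.natCast_eq_one_iff_odd.2 h, one_smul]
  · rw [ZMod.natCast_eq_zero_iff_even.2 (Nat.not_odd_iff_even.1 h), zero_smul]

lemma odd_card_filter_odd_count {α : Type*} [DecidableEq α] (l : List α) :
    Odd (Finset.card {a ∈ l.toFinset | Odd (l.count a)}) ↔ Odd l.length := by
  have h := sum_filter_odd_count l (fun _ => (1 : ZMod 2))
  simp only [Finset.sum_const, List.map_const', List.sum_replicate, nsmul_one] at h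
  rw [← ZMod.natCast_eq_one_iff_odd, h, ZMod.natCast_eq_one_iff_odd]

lemma sum_map_endpointSum_edges (w : V → M) {u v : V} (p : G.Walk u v) :
    (p.edges.map (endpointSum w)).sum = w u + w v := by
  induction p with
  | nil => simp [ZModModule.add_self]
  | cons h p ih =>
    rw [SimpleGraph.Walk.edges_cons, List.map_cons, List.sum_cons, ih, endpointSum_mk,
      ZModModule.add_add_add_cancel]

lemma exists_odd_card_sum_endpointSum_eq_zero (w : V → M) (hG : ¬ G.Colorable 2) :
    ∃ S : Finset (Sym2 V), ↑S ⊆ G.edgeSet ∧ Odd S.card ∧ ∑ e ∈ S, endpointSum w e = 0 := by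
  classical
  obtain ⟨u, p, hp⟩ : ∃ u, ∃ p : G.Walk u u, ¬ Even p.length := by
    simpa only [SimpleGraph.two_colorable_iff_forall_loop_even, not_forall] using hG
  refine ⟨{e ∈ p.edges.toFinset | Odd (p.edges.count e)}, fun e he => ?_, ?_, ?_⟩
  · exact p.edges_subset_edgeSet (List.mem_toFinset.1 (Finset.mem_filter.1 he).1)
  · rwa [odd_card_filter_odd_count, p.length_edges, ← Nat.not_even_iff_odd]
  · rw [sum_filter_odd_count, sum_map_endpointSum_edges, ZModModule.add_self]

end CharTwo

theorem stmt5_general {V M : Type*} [AddCommGroup M] [Module (ZMod 2) M] {w : V → M}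
    (hw : AffineIndependent (ZMod 2) w) (G : SimpleGraph V) :
    G.Colorable 2 ↔
      ∀ S : Finset (Sym2 V), ↑S ⊆ G.edgeSet → Odd S.card → ∑ e ∈ S, endpointSum w e ≠ 0 := by
  constructor
  · intro hG S hS hodd hzero
    have c : G.Coloring (ZMod 2) := hG.toColoring (ZMod.card 2).ge
    have hcard : ∑ e ∈ S, endpointSum c e = (S.card : ZMod 2) := by
      rw [Finset.sum_congr rfl fun e he => endpointSum_coloring_eq_one c (hS he), Finset.sum_const,
        nsmul_one]
    rw [sum_endpointSum_eq_zero_of_affineIndependent hw hzero,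
      ZMod.natCast_eq_one_iff_odd.2 hodd] at hcard
    exact zero_ne_one hcard
  · intro h
    by_contra hG
    obtain ⟨S, hS, hodd, hzero⟩ := exists_odd_card_sum_endpointSum_eq_zero w hG
    exact h S hS hodd hzero

/-- The indicator vector of the coordinates `k < i`. Over `ZMod 2` these vectors label the vertices
so that the coding vector of an edge is the sum of the labels of its ends. -/
def prefixIndicator (R : Type*) [Zero R] [One R] (n : ℕ) (i : Fin n) : Fin (n - 1) → R :=
  fun k => if k.val < i.val then 1 else 0

lemma chi_eq_endpointSum (n : ℕ) : chi n = endpointSum (prefixIndicator (ZMod 2) n) := by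
  funext e k
  induction e with | _ i j
  have one_add_one : (1 : ZMod 2) + 1 = 0 := by decide
  by_cases hi : k.val < i.val <;> by_cases hj : k.val < j.val <;>
    simp [chi, prefixIndicator, hi, hj, one_add_one]

lemma affineIndependent_prefixIndicator (R : Type*) [Ring R] (n : ℕ) :
    AffineIndependent R (prefixIndicator R n) := by
  rw [affineIndependent_iff]
  intro s a hsum hcomb
  have tail_sum_eq_zero (m : ℕ) : ∑ i ∈ s with m ≤ i.val, a i = 0 := by
    cases m with
    | zero => simpa using hsum
    | succ k =>
      by_cases hk : k < n - 1
      · have hcoord := congrFun hcomb ⟨k, hk⟩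
        simpa [Finset.sum_filter, prefixIndicator, Nat.add_one_le_iff] using hcoord
      · rw [Finset.filter_false_of_mem fun i _ => by lia, Finset.sum_empty]
  intro j hj
  have tail_eq_insert : {i ∈ s | j.val ≤ i.val} = insert j {i ∈ s | j.val + 1 ≤ i.val} := by
    grind
  have h := tail_sum_eq_zero j
  rwa [tail_eq_insert, Finset.sum_insert (by simp), tail_sum_eq_zero, add_zero] at h

theorem stmt5 (n : ℕ) (hn : 2 ≤ n) (G : SimpleGraph (Fin n)) :
    G.Colorable 2 ↔
      ∀ S : Finset (Sym2 (Fin n)), ↑S ⊆ G.edgeSet → Odd S.card →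
        ∑ e ∈ S, chi n e ≠ 0 := by
  rw [chi_eq_endpointSum]
  exact stmt5_general (affineIndependent_prefixIndicator (ZMod 2) n) G
end

section
/- Let n ≥ 2 and let G be a simple graph on Fin n. Then G is a tree (connected and acyclic) if and only if the family of vectors (χ(e))_{e ∈ E(G)}, indexed by the edge set of G, is a basis of the vector space (Fin (n-1) → ZMod 2) over ZMod 2 (i.e., it is linearly independent and spans the whole space). -/
/-!
Place the vertices of a graph at affinely independent points and attach to each edge the difference
of its two endpoints. Along a walk these differences telescope, so the span of the edge vectors
contains the difference of any two vertices joined by a walk. Conversely, affine independence lets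
one prescribe a linear functional through a potential on the vertices; the indicator of a connected
component yields a functional that kills every edge vector but separates that component from the
rest. Spanning is therefore connectedness, and, applying this to the graph with one edge deleted,
linear independence says that every edge is a bridge. Over `ZMod 2`, the coding vector of `{i, j}`
is the difference of the indicators of `{k | k < i}` and `{k | k < j}`, and these indicators form an
affine basis.
-/

open Module Submodule

section EdgeVectors

variable {V K W P : Type*} [AddCommGroup W] [AddTorsor W P] {G : SimpleGraph V}

/-- `x` is a family of edge vectors of `G` for the placement `p` of the vertices: each edge is sent
to the difference of its endpoints. Connectedness and acyclicity of `G` are read off from `x`. As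
edges are unordered, the sign is left free, edge by edge. -/
def IsEdgeVectorFamily (p : V → P) (x : G.edgeSet → W) : Prop :=
  ∀ ⦃u v : V⦄ (h : G.Adj u v), x ⟨s(u, v), h⟩ = p u -ᵥ p v ∨ x ⟨s(u, v), h⟩ = p v -ᵥ p u

theorem vsub_mem_of_reachable {p : V → P} {S : AddSubgroup W}
    (hS : ∀ ⦃u v⦄, G.Adj u v → p u -ᵥ p v ∈ S) {u v : V} (huv : G.Reachable u v) :
    p u -ᵥ p v ∈ S := by
  obtain ⟨w⟩ := huv
  induction w with
  | nil => simp
  | cons h _ ih => simpa only [vsub_add_vsub_cancel] using S.add_mem (hS h) ih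

namespace IsEdgeVectorFamily

theorem exists_eq_vsub {p : V → P} {x : G.edgeSet → W} (hx : IsEdgeVectorFamily p x)
    (e : G.edgeSet) : ∃ u v, e.1 = s(u, v) ∧ x e = p u -ᵥ p v := by
  obtain ⟨⟨u, v⟩, h⟩ := e
  rcases hx h with huv | hvu
  · exact ⟨u, v, rfl, huv⟩
  · exact ⟨v, u, Sym2.eq_swap, hvu⟩

theorem vsub_mem_span_image [Ring K] [Module K W] {p : V → P} {x : G.edgeSet → W}
    (hx : IsEdgeVectorFamily p x) {s : Set G.edgeSet} {u v : V} (h : G.Adj u v)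
    (hs : ⟨s(u, v), h⟩ ∈ s) : p u -ᵥ p v ∈ span K (x '' s) := by
  have hmem : x ⟨s(u, v), h⟩ ∈ span K (x '' s) := subset_span (Set.mem_image_of_mem x hs)
  rcases hx h with huv | hvu
  · rwa [← huv]
  · rwa [← neg_mem_iff, neg_vsub_eq_vsub_rev, ← hvu]

end IsEdgeVectorFamily

section Ring

variable [Ring K] [Module K W] (b : AffineBasis V K P)

theorem exists_linearMap_vsub_eq_sub {M : Type*} [AddCommGroup M] [Module K M] (c : V → M) :
    ∃ f : W →ₗ[K] M, ∀ u v, f (b u -ᵥ b v) = c u - c v := by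
  obtain ⟨r⟩ := b.nonempty
  let f : W →ₗ[K] M := (b.basisOf r).constr ℕ fun v => c v - c r
  have hroot (v : V) : f (b v -ᵥ b r) = c v - c r := by
    obtain rfl | hv := eq_or_ne v r
    · simp
    · rw [← b.basisOf_apply r ⟨v, hv⟩, Basis.constr_basis]
  refine ⟨f, fun u v => ?_⟩
  rw [← vsub_sub_vsub_cancel_right (b u) (b v) (b r), map_sub, hroot, hroot,
    sub_sub_sub_cancel_right]

theorem exists_functional_eq_one_of_not_reachable {u v : V} (huv : ¬G.Reachable u v) :
    ∃ f : W →ₗ[K] K, f (b u -ᵥ b v) = 1 ∧ ∀ ⦃i j⦄, G.Adj i j → f (b i -ᵥ b j) = 0 := by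
  classical
  obtain ⟨f, hf⟩ := exists_linearMap_vsub_eq_sub b fun i => if G.Reachable u i then (1 : K) else 0
  refine ⟨f, by simp [hf, huv], fun i j hij => ?_⟩
  have hiff : G.Reachable u i ↔ G.Reachable u j :=
    ⟨fun h => h.trans hij.reachable, fun h => h.trans hij.symm.reachable⟩
  rw [hf, if_congr hiff rfl rfl, sub_self]

variable {b} {x : G.edgeSet → W}

namespace IsEdgeVectorFamily

theorem span_range_eq_top_of_connected (hx : IsEdgeVectorFamily b x) (hG : G.Connected) :
    span K (Set.range x) = ⊤ := by
  rw [← Set.image_univ, eq_top_iff,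
    ← AffineSubspace.vectorSpan_eq_top_of_affineSpan_eq_top K W P b.tot, vectorSpan_def, span_le]
  rintro _ ⟨_, ⟨u, rfl⟩, _, ⟨v, rfl⟩, rfl⟩
  exact vsub_mem_of_reachable (S := (span K (x '' Set.univ)).toAddSubgroup)
    (fun _ _ h => hx.vsub_mem_span_image h (Set.mem_univ _)) (hG.preconnected u v)

theorem connected_of_span_range_eq_top [Nontrivial K] (hx : IsEdgeVectorFamily b x)
    (hspan : span K (Set.range x) = ⊤) : G.Connected := by
  refine SimpleGraph.connected_iff _ |>.2 ⟨fun u v => ?_, b.nonempty⟩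
  by_contra huv
  obtain ⟨f, hfuv, hf⟩ := exists_functional_eq_one_of_not_reachable b huv
  have hf_zero : f = 0 := by
    refine LinearMap.ext_on_range hspan fun e => ?_
    obtain ⟨i, j, he, hxe⟩ := hx.exists_eq_vsub e
    rw [hxe, hf (G.mem_edgeSet.1 (he ▸ e.2)), LinearMap.zero_apply]
  simp [hf_zero] at hfuv

theorem span_range_eq_top_iff_connected [Nontrivial K] (hx : IsEdgeVectorFamily b x) :
    span K (Set.range x) = ⊤ ↔ G.Connected :=
  ⟨hx.connected_of_span_range_eq_top, hx.span_range_eq_top_of_connected⟩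

theorem isAcyclic_of_linearIndependent [Nontrivial K] {p : V → P} (hx : IsEdgeVectorFamily p x)
    (hli : LinearIndependent K x) : G.IsAcyclic := by
  refine SimpleGraph.isAcyclic_iff_forall_isBridge.2 fun e he => ?_
  obtain ⟨u, v, rfl, hxe⟩ := hx.exists_eq_vsub ⟨e, he⟩
  refine SimpleGraph.isBridge_iff.2 fun hreach => ?_
  refine hli.notMem_span_image (s := {⟨s(u, v), he⟩}ᶜ) (Set.notMem_compl_iff.2 rfl) ?_
  rw [hxe]
  refine vsub_mem_of_reachable (S := (span K _).toAddSubgroup) (fun i j hij => ?_) hreach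
  obtain ⟨hadj, hne⟩ := SimpleGraph.deleteEdges_adj.1 hij
  exact hx.vsub_mem_span_image hadj fun h => hne (congrArg Subtype.val h)

theorem exists_functional_of_isBridge (hx : IsEdgeVectorFamily b x) {e : G.edgeSet}
    (he : G.IsBridge e.1) : ∃ f : W →ₗ[K] K, f (x e) = 1 ∧ ∀ e' ≠ e, f (x e') = 0 := by
  obtain ⟨u, v, huv, hxe⟩ := hx.exists_eq_vsub e
  rw [huv, SimpleGraph.isBridge_iff, ← huv] at he
  obtain ⟨f, hfuv, hf⟩ := exists_functional_eq_one_of_not_reachable b he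
  refine ⟨f, hxe ▸ hfuv, fun e' hne => ?_⟩
  obtain ⟨i, j, hij, hxe'⟩ := hx.exists_eq_vsub e'
  rw [hxe']
  refine hf (SimpleGraph.deleteEdges_adj.2 ⟨G.mem_edgeSet.1 (hij ▸ e'.2), ?_⟩)
  rw [← hij]
  exact fun h => hne (Subtype.ext h)

theorem linearIndependent_of_isAcyclic (hx : IsEdgeVectorFamily b x) (hG : G.IsAcyclic) :
    LinearIndependent K x := by
  refine linearIndependent_iff'.2 fun s g hsum e he => ?_
  obtain ⟨f, hf_self, hf_ne⟩ :=
    hx.exists_functional_of_isBridge (SimpleGraph.isAcyclic_iff_forall_isBridge.1 hG e.2)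
  calc
    g e = ∑ e' ∈ s, g e' * f (x e') := by
      rw [Finset.sum_eq_single_of_mem e he fun e' _ hne => by rw [hf_ne e' hne, mul_zero],
        hf_self, mul_one]
    _ = f (∑ e' ∈ s, g e' • x e') := by simp only [map_sum, map_smul, smul_eq_mul]
    _ = 0 := by rw [hsum, map_zero]

theorem linearIndependent_iff_isAcyclic [Nontrivial K] (hx : IsEdgeVectorFamily b x) :
    LinearIndependent K x ↔ G.IsAcyclic :=
  ⟨hx.isAcyclic_of_linearIndependent, hx.linearIndependent_of_isAcyclic⟩

end IsEdgeVectorFamily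

theorem stmt6_general [Nontrivial K] (hx : IsEdgeVectorFamily b x) :
    (G.Connected ∧ G.IsAcyclic) ↔ (LinearIndependent K x ∧ span K (Set.range x) = ⊤) := by
  rw [hx.linearIndependent_iff_isAcyclic, hx.span_range_eq_top_iff_connected, and_comm]

end Ring

end EdgeVectors

section LowerIndicator

/-- The indicator of the `i` smallest elements of `Fin m`. These vectors are the placement of the
vertices for which the coding vectors `chi` are edge vectors; the index runs over `Fin (m + 1)`
because both the zero and the all-ones vector are included. -/
def lowerIndicator (K : Type*) [Zero K] [One K] {m : ℕ} (i : Fin (m + 1)) : Fin m → K :=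
  fun k => if k.castSucc < i then 1 else 0

theorem lowerIndicator_succ_sub_castSucc (K : Type*) [Ring K] {m : ℕ} (k : Fin m) :
    lowerIndicator K k.succ - lowerIndicator K k.castSucc = Pi.single k 1 := by
  funext l
  simp only [lowerIndicator, Pi.sub_apply, Pi.single_apply, Fin.castSucc_lt_succ_iff,
    Fin.castSucc_lt_castSucc_iff]
  obtain h | rfl | h := lt_trichotomy l k
  · simp [h, h.le, h.ne]
  · simp
  · simp [h.not_ge, h.not_gt, h.ne']

theorem vectorSpan_range_lowerIndicator (K : Type*) [Ring K] (m : ℕ) :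
    vectorSpan K (Set.range (lowerIndicator K (m := m))) = ⊤ := by
  rw [eq_top_iff, ← (Pi.basisFun K (Fin m)).span_eq, span_le]
  rintro _ ⟨k, rfl⟩
  rw [Pi.basisFun_apply, ← lowerIndicator_succ_sub_castSucc]
  exact vsub_mem_vectorSpan K (Set.mem_range_self _) (Set.mem_range_self _)

/-- The vectors `lowerIndicator` as an affine basis of `Fin m → K`, the placement of the vertices to
which `stmt6_general` is applied. -/
def lowerAffineBasis (K : Type*) [DivisionRing K] (m : ℕ) :
    AffineBasis (Fin (m + 1)) K (Fin m → K) where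
  toFun := lowerIndicator K
  ind' := by
    rw [affineIndependent_iff_finrank_vectorSpan_eq K _ (Fintype.card_fin _),
      vectorSpan_range_lowerIndicator, finrank_top, finrank_fin_fun]
  tot' := (AffineSubspace.affineSpan_eq_top_iff_vectorSpan_eq_top_of_nonempty K _ _
    (Set.range_nonempty _)).2 (vectorSpan_range_lowerIndicator K m)

theorem chi_mk_eq_lowerIndicator_sub {m : ℕ} (i j : Fin (m + 1)) :
    chi (m + 1) s(i, j) = lowerIndicator (ZMod 2) i - lowerIndicator (ZMod 2) j := by
  funext k
  simp only [chi, Sym2.lift_mk, lowerIndicator, Pi.sub_apply, Fin.lt_def, Fin.val_castSucc]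
  rw [CharTwo.sub_eq_add]
  split_ifs <;> first | omega | simp [CharTwo.add_self_eq_zero]

theorem isEdgeVectorFamily_chi {m : ℕ} (G : SimpleGraph (Fin (m + 1))) :
    IsEdgeVectorFamily (lowerAffineBasis (ZMod 2) m) fun e : G.edgeSet => chi (m + 1) e.val :=
  fun i j _ => .inl (chi_mk_eq_lowerIndicator_sub i j)

end LowerIndicator

theorem stmt6 (n : ℕ) (hn : 2 ≤ n) (G : SimpleGraph (Fin n)) :
    (G.Connected ∧ G.IsAcyclic) ↔
      (LinearIndependent (ZMod 2) (fun e : G.edgeSet => chi n e.val) ∧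
        Submodule.span (ZMod 2) (Set.range fun e : G.edgeSet => chi n e.val) = ⊤) := by
  obtain ⟨m, rfl⟩ : ∃ m, n = m + 1 := ⟨n - 1, by omega⟩
  exact stmt6_general (isEdgeVectorFamily_chi G)
end

section
/- Let S₁ and S₂ be finite sets of nonzero vectors in (Fin n → ZMod 2) with |S₁| = |S₂|. Then there exists a bijection ψ : S₁ → S₂ such that for every subset X of S₁, X is linearly independent over ZMod 2 if and only if ψ(X) is linearly independent over ZMod 2, if and only if there exists a bijective linear operator (linear equivalence) T on (Fin n → ZMod 2) whose image of S₁ is exactly S₂ (i.e., T '' S₁ = S₂). -/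
/-!
Over `ZMod 2` a linear relation is a finite subfamily with zero sum, so a minimal dependent
subfamily must itself have zero sum, and every zero-sum subfamily splits off minimal dependent ones
until nothing is left. Hence the independent sets of a binary family determine all its linear
relations, and two families with the same relations differ by an isomorphism of their spans, which
extends to the whole space once the spans are finite-dimensional.
-/

theorem exists_linearEquiv_comp_eq_of_ker_eq {K M V : Type*} [DivisionRing K] [AddCommGroup M]
    [Module K M] [AddCommGroup V] [Module K V] {f g : M →ₗ[K] V}
    [FiniteDimensional K (LinearMap.range f)] (hfg : LinearMap.ker f = LinearMap.ker g) :
    ∃ T : V ≃ₗ[K] V, T.toLinearMap ∘ₗ f = g := by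
  let e : LinearMap.range f ≃ₗ[K] LinearMap.range g :=
    f.quotKerEquivRange.symm ≪≫ₗ Submodule.quotEquivOfEq _ _ hfg ≪≫ₗ g.quotKerEquivRange
  have he (x : M) : (e ⟨f x, f.mem_range_self x⟩ : V) = g x := by
    simp only [e, LinearEquiv.trans_apply, LinearMap.quotKerEquivRange_symm_apply_image,
      Submodule.mkQ_apply, Submodule.quotEquivOfEq_mk, LinearMap.quotKerEquivRange_apply_mk]
  obtain ⟨T, hT⟩ := Submodule.exists_linearEquiv_restrict_eq e
  exact ⟨T, LinearMap.ext fun x => (hT ⟨f x, f.mem_range_self x⟩).symm.trans (he x)⟩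

section BinaryFamily

variable {ι V W : Type*} [AddCommGroup V] [Module (ZMod 2) V] [AddCommGroup W] [Module (ZMod 2) W]
  {u : ι → V} {w : ι → W}

theorem linearCombination_zmod_two_eq_sum_support (u : ι → V) (c : ι →₀ ZMod 2) :
    Finsupp.linearCombination (ZMod 2) u c = ∑ i ∈ c.support, u i := by
  refine Finset.sum_congr rfl fun i hi => ?_
  have hc : c i = 1 := Fin.eq_one_of_ne_zero _ (Finsupp.mem_support_iff.1 hi)
  simp only [LinearMap.coe_smulRight, LinearMap.id_coe, id_eq, hc, one_smul]

theorem linearIndepOn_zmod_two_iff {s : Set ι} :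
    LinearIndepOn (ZMod 2) u s ↔ ∀ t : Finset ι, ↑t ⊆ s → ∑ i ∈ t, u i = 0 → t = ∅ := by
  constructor
  · intro hs t hts hsum
    by_contra hne
    obtain ⟨i, hi⟩ := Finset.nonempty_iff_ne_empty.2 hne
    have hone : (1 : ZMod 2) = 0 :=
      linearIndepOn_iff'.1 hs t (fun _ => 1) hts (by simpa only [one_smul] using hsum) i hi
    exact one_ne_zero hone
  · intro hs
    refine linearIndepOn_iff.2 fun c hc hsum => Finsupp.support_eq_empty.1 (hs _ hc ?_)
    rwa [← linearCombination_zmod_two_eq_sum_support]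

theorem sum_eq_zero_of_minimal_not_linearIndepOn {C : Finset ι}
    (hC : Minimal (fun s : Finset ι => ¬LinearIndepOn (ZMod 2) u (s : Set ι)) C) :
    ∑ i ∈ C, u i = 0 := by
  obtain ⟨t, htC, hsum, hne⟩ :
      ∃ t : Finset ι, (t : Set ι) ⊆ C ∧ ∑ i ∈ t, u i = 0 ∧ t ≠ ∅ := by
    simpa only [linearIndepOn_zmod_two_iff, not_forall, exists_prop] using hC.prop
  have ht : ¬LinearIndepOn (ZMod 2) u (t : Set ι) := fun h =>
    hne (linearIndepOn_zmod_two_iff.1 h t subset_rfl hsum)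
  rwa [← hC.eq_of_le ht (Finset.coe_subset.1 htC)]

theorem sum_eq_zero_of_linearIndepOn_iff
    (huw : ∀ s : Finset ι, LinearIndepOn (ZMod 2) u (s : Set ι) ↔
      LinearIndepOn (ZMod 2) w (s : Set ι))
    (A : Finset ι) (hA : ∑ i ∈ A, u i = 0) : ∑ i ∈ A, w i = 0 := by
  classical
  induction A using Finset.strongInduction with
  | H A ih =>
    obtain rfl | hne := A.eq_empty_or_nonempty
    · exact Finset.sum_empty
    have hdep : ¬LinearIndepOn (ZMod 2) u (A : Set ι) := fun h =>
      hne.ne_empty (linearIndepOn_zmod_two_iff.1 h A subset_rfl hA)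
    obtain ⟨C, hCA, hC⟩ := exists_minimal_le_of_wellFoundedLT
      (fun s : Finset ι => ¬LinearIndepOn (ZMod 2) u (s : Set ι)) A hdep
    have huC : ∑ i ∈ C, u i = 0 := sum_eq_zero_of_minimal_not_linearIndepOn hC
    have hwC : ∑ i ∈ C, w i = 0 :=
      sum_eq_zero_of_minimal_not_linearIndepOn (by simpa only [huw] using hC)
    have hCne : C.Nonempty := by
      rw [Finset.nonempty_iff_ne_empty]
      rintro rfl
      exact hC.prop (by simp only [Finset.coe_empty, linearIndepOn_empty])
    have huAC : ∑ i ∈ A \ C, u i = 0 := by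
      rw [← Finset.sum_sdiff hCA, huC, add_zero] at hA
      exact hA
    rw [← Finset.sum_sdiff hCA, hwC, add_zero]
    exact ih (A \ C) (Finset.sdiff_ssubset hCA hCne) huAC

theorem ker_linearCombination_eq_of_linearIndepOn_iff
    (huw : ∀ s : Finset ι, LinearIndepOn (ZMod 2) u (s : Set ι) ↔
      LinearIndepOn (ZMod 2) w (s : Set ι)) :
    LinearMap.ker (Finsupp.linearCombination (ZMod 2) u) =
      LinearMap.ker (Finsupp.linearCombination (ZMod 2) w) := by
  ext c
  simp only [LinearMap.mem_ker, linearCombination_zmod_two_eq_sum_support]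
  exact ⟨sum_eq_zero_of_linearIndepOn_iff huw _,
    sum_eq_zero_of_linearIndepOn_iff (fun s => (huw s).symm) _⟩

theorem exists_linearEquiv_apply_eq_of_linearIndepOn_iff {u' : ι → V}
    [FiniteDimensional (ZMod 2) (Submodule.span (ZMod 2) (Set.range u))]
    (huu' : ∀ s : Finset ι, LinearIndepOn (ZMod 2) u (s : Set ι) ↔
      LinearIndepOn (ZMod 2) u' (s : Set ι)) :
    ∃ T : V ≃ₗ[ZMod 2] V, ∀ i, T (u i) = u' i := by
  have : FiniteDimensional (ZMod 2) (LinearMap.range (Finsupp.linearCombination (ZMod 2) u)) := by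
    rwa [Finsupp.range_linearCombination]
  obtain ⟨T, hT⟩ := exists_linearEquiv_comp_eq_of_ker_eq
    (ker_linearCombination_eq_of_linearIndepOn_iff huu')
  refine ⟨T, fun i => ?_⟩
  simpa only [LinearMap.comp_apply, Finsupp.linearCombination_single, one_smul,
    LinearEquiv.coe_coe] using LinearMap.congr_fun hT (Finsupp.single i 1)

theorem exists_linearEquiv_eqOn_of_linearIndepOn_image_iff {S : Set V}
    [FiniteDimensional (ZMod 2) (Submodule.span (ZMod 2) S)] {ψ : V → V} (hinj : Set.InjOn ψ S)
    (hψ : ∀ X ⊆ S, LinearIndepOn (ZMod 2) id X ↔ LinearIndepOn (ZMod 2) id (ψ '' X)) :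
    ∃ T : V ≃ₗ[ZMod 2] V, Set.EqOn T ψ S := by
  have : FiniteDimensional (ZMod 2) (Submodule.span (ZMod 2) (Set.range ((↑) : S → V))) := by
    rwa [Subtype.range_coe]
  have hinj' : Function.Injective (ψ ∘ ((↑) : S → V)) := hinj.injective
  have hrestrict (s : Finset S) : LinearIndepOn (ZMod 2) ((↑) : S → V) (s : Set S) ↔
      LinearIndepOn (ZMod 2) (ψ ∘ ((↑) : S → V)) (s : Set S) := by
    rw [linearIndepOn_iff_image Subtype.val_injective.injOn,
      linearIndepOn_iff_image hinj'.injOn, Set.image_comp]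
    exact hψ _ (Subtype.coe_image_subset S s)
  obtain ⟨T, hT⟩ := exists_linearEquiv_apply_eq_of_linearIndepOn_iff hrestrict
  exact ⟨T, fun v hv => hT ⟨v, hv⟩⟩

theorem stmt9_general {S₁ S₂ : Set V}
    [FiniteDimensional (ZMod 2) (Submodule.span (ZMod 2) S₁)] :
    (∃ ψ : V → V, Set.BijOn ψ S₁ S₂ ∧
        ∀ X : Set V, X ⊆ S₁ →
          (LinearIndependent (ZMod 2) ((↑) : X → V) ↔
            LinearIndependent (ZMod 2) ((↑) : (ψ '' X) → V))) ↔
      ∃ T : V ≃ₗ[ZMod 2] V, ⇑T '' S₁ = S₂ := by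
  constructor
  · rintro ⟨ψ, hbij, hψ⟩
    obtain ⟨T, hT⟩ := exists_linearEquiv_eqOn_of_linearIndepOn_image_iff hbij.injOn hψ
    exact ⟨T, hT.image_eq.trans hbij.image_eq⟩
  · rintro ⟨T, rfl⟩
    refine ⟨T, T.injective.injOn.bijOn_image, fun X _ => ?_⟩
    exact (T.toLinearMap.linearIndepOn_iff_of_injOn T.injective.injOn).symm.trans
      (linearIndepOn_iff_image T.injective.injOn)

end BinaryFamily

theorem stmt9 (n : ℕ) (S₁ S₂ : Finset (Fin n → ZMod 2))
    (h₁ : (0 : Fin n → ZMod 2) ∉ S₁) (h₂ : (0 : Fin n → ZMod 2) ∉ S₂)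
    (hcard : S₁.card = S₂.card) :
    (∃ ψ : (Fin n → ZMod 2) → (Fin n → ZMod 2), Set.BijOn ψ ↑S₁ ↑S₂ ∧
        ∀ X : Set (Fin n → ZMod 2), X ⊆ ↑S₁ →
          (LinearIndependent (ZMod 2) ((↑) : X → (Fin n → ZMod 2)) ↔
            LinearIndependent (ZMod 2) ((↑) : (ψ '' X) → (Fin n → ZMod 2)))) ↔
      (∃ T : (Fin n → ZMod 2) ≃ₗ[ZMod 2] (Fin n → ZMod 2), ⇑T '' ↑S₁ = ↑S₂) :=
  stmt9_general
end

section
/- Let n ≥ 2 and let S be a finite subset of C(n-1). Then there exist a simple graph G on Fin n and a bijection ψ from S onto the edge set of G such that for every subset X of S, X is linearly independent over ZMod 2 if and only if the spanning subgraph of G with edge set ψ(X) is acyclic. (Every simple segment binary matroid is simple graphic.) -/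
/-!
Over any division ring, the edges of a graph whose vertices sit at affinely independent positions
`p` represent the graphic matroid through the differences of their ends: along a path these
differences telescope, and conversely a linear functional sending every `p i - p j` to `c i - c j`,
with `c` the indicator of a connected component, kills all edges but no difference of an end in
that component and an end outside it. A segment vector with support `{a, …, b}` is the difference
of the prefix vectors of lengths `b + 1` and `a`, and the prefix vectors are affinely independent.
-/

section EdgeDiff

variable {K V M : Type*} [AddCommGroup M]

/-- The vector representing an edge: the difference of the positions `p` of its ends. The linear
order on the vertices is auxiliary; it orients every edge from its smaller to its larger end. -/
def edgeDiff [LinearOrder V] (p : V → M) (e : Sym2 V) : M := p e.sup - p e.inf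

theorem edgeDiff_mk_of_le [LinearOrder V] (p : V → M) {u v : V} (h : u ≤ v) :
    edgeDiff p s(u, v) = p v - p u := by
  simp [edgeDiff, h]

theorem edgeDiff_mk_mem_iff [LinearOrder V] [Ring K] [Module K M] (p : V → M)
    (W : Submodule K M) (u v : V) : edgeDiff p s(u, v) ∈ W ↔ p u - p v ∈ W := by
  rcases le_total u v with h | h
  · rw [edgeDiff_mk_of_le p h, sub_mem_comm_iff]
  · rw [Sym2.eq_swap, edgeDiff_mk_of_le p h]

theorem exists_linearMap_sub_eq {N : Type*} [DivisionRing K] [Module K M] [AddCommGroup N]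
    [Module K N] {p : V → M} (hp : AffineIndependent K p) (c : V → N) :
    ∃ φ : M →ₗ[K] N, ∀ i j, φ (p i - p j) = c i - c j := by
  rcases isEmpty_or_nonempty V with _ | ⟨⟨o⟩⟩
  · exact ⟨0, isEmptyElim⟩
  have hli := (affineIndependent_iff_linearIndependent_vsub K p o).mp hp
  obtain ⟨φ, hφ⟩ :=
    ((Module.Basis.span hli).constr ℕ fun i => c i - c o).exists_extend
  have hφo : ∀ i, φ (p i - p o) = c i - c o := fun i => by
    by_cases hi : i = o
    · simp [hi]
    · have h := congr($hφ (Module.Basis.span hli ⟨i, hi⟩))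
      rwa [Module.Basis.constr_basis, LinearMap.comp_apply, Submodule.subtype_apply,
        Module.Basis.span_apply] at h
  refine ⟨φ, fun i j => ?_⟩
  rw [← sub_sub_sub_cancel_right (p i) (p j) (p o), map_sub, hφo, hφo, sub_sub_sub_cancel_right]

theorem edgeDiff_mem_span_of_reachable [LinearOrder V] [Ring K] [Module K M] (p : V → M)
    {H : SimpleGraph V} {u v : V} (h : H.Reachable u v) :
    edgeDiff p s(u, v) ∈ Submodule.span K (edgeDiff p '' H.edgeSet) := by
  rw [edgeDiff_mk_mem_iff]
  obtain ⟨walk⟩ := h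
  induction walk with
  | nil => simp
  | @cons u w v huw _ ih =>
    rw [← sub_add_sub_cancel (p u) (p w) (p v)]
    refine add_mem ((edgeDiff_mk_mem_iff p _ u w).mp ?_) ih
    exact Submodule.subset_span (Set.mem_image_of_mem _ huw)

variable [LinearOrder V] [DivisionRing K] [Module K M] {p : V → M}

theorem reachable_of_edgeDiff_mem_span (hp : AffineIndependent K p) {H : SimpleGraph V} {u v : V}
    (h : edgeDiff p s(u, v) ∈ Submodule.span K (edgeDiff p '' H.edgeSet)) : H.Reachable u v := by
  classical
  let c : V → K := fun i => if H.Reachable u i then 1 else 0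
  obtain ⟨φ, hφ⟩ := exists_linearMap_sub_eq hp c
  have hc : ∀ i j, edgeDiff p s(i, j) ∈ LinearMap.ker φ ↔ c i = c j := fun i j => by
    rw [edgeDiff_mk_mem_iff, LinearMap.mem_ker, hφ, sub_eq_zero]
  have hker : Submodule.span K (edgeDiff p '' H.edgeSet) ≤ LinearMap.ker φ := by
    rw [Submodule.span_le, Set.image_subset_iff]
    rintro ⟨i, j⟩ (hij : H.Adj i j)
    have hreach : H.Reachable u i ↔ H.Reachable u j :=
      ⟨fun hi => hi.trans hij.reachable, fun hj => hj.trans hij.symm.reachable⟩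
    exact (hc i j).mpr (by simp only [c, hreach])
  have huv : c u = c v := (hc u v).mp (hker h)
  by_contra hv
  simp [c, hv] at huv

theorem edgeDiff_mem_span_iff_reachable (hp : AffineIndependent K p) (H : SimpleGraph V) (u v : V) :
    edgeDiff p s(u, v) ∈ Submodule.span K (edgeDiff p '' H.edgeSet) ↔ H.Reachable u v :=
  ⟨reachable_of_edgeDiff_mem_span hp, edgeDiff_mem_span_of_reachable p⟩

theorem linearIndepOn_edgeDiff_iff_isAcyclic (hp : AffineIndependent K p) (G : SimpleGraph V) :
    LinearIndepOn K (edgeDiff p) G.edgeSet ↔ G.IsAcyclic := by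
  rw [linearIndepOn_iff_notMem_span, SimpleGraph.isAcyclic_iff_forall_isBridge]
  refine forall₂_congr fun e _ => ?_
  induction e with | _ u v
  rw [← SimpleGraph.edgeSet_deleteEdges, edgeDiff_mem_span_iff_reachable hp,
    SimpleGraph.isBridge_iff]

end EdgeDiff

section SegmentVectors

variable (K : Type*) [Ring K] (N : ℕ)

/-- The 0/1-vector whose support is the set of the first `i` coordinates, the position of vertex
`i`: over `ZMod 2`, with `n = N + 1` vertices, `edgeDiff (prefixVector K N)` is the coding map
`chi n`. -/
def prefixVector (i : Fin (N + 1)) : Fin N → K := fun k => if k.castSucc < i then 1 else 0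

/-- The 0/1-vectors over `K` whose support is a nonempty interval of consecutive indices, the
columns of an interval matrix. -/
def segmentVectors : Set (Fin N → K) := {v | ∃ a b : Fin N, a ≤ b ∧ v = (Set.Icc a b).indicator 1}

theorem affineIndependent_prefixVector : AffineIndependent K (prefixVector K N) := by
  rw [affineIndependent_iff_of_fintype]
  intro w hw hsum
  rw [Finset.univ.weightedVSub_eq_linear_combination hw] at hsum
  have sum_Ioi : ∀ k : Fin N, ∑ j ∈ Finset.Ioi k.castSucc, w j = 0 := fun k => by
    simpa [prefixVector, ← Finset.sum_filter, Finset.filter_lt_eq_Ioi] using congr_fun hsum k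
  have sum_Ici : ∀ i, ∑ j ∈ Finset.Ici i, w j = 0 := by
    refine Fin.cases (by simpa [← bot_eq_zero] using hw) fun k => ?_
    have hIci : Finset.Ici k.succ = Finset.Ioi k.castSucc := by
      ext j
      simp [Fin.castSucc_lt_iff_succ_le]
    rw [hIci, sum_Ioi]
  refine Fin.lastCases ?_ fun k => ?_
  · simpa [← Fin.top_eq_last] using sum_Ici (Fin.last N)
  · simpa [← Finset.add_sum_Ioi_eq_sum_Ici, sum_Ioi] using sum_Ici k.castSucc

variable {K N}

theorem prefixVector_succ_sub_castSucc {a b : Fin N} (h : a ≤ b) :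
    prefixVector K N b.succ - prefixVector K N a.castSucc = (Set.Icc a b).indicator 1 := by
  ext k
  simp only [prefixVector, Pi.sub_apply, Set.indicator_apply, Set.mem_Icc, Pi.one_apply,
    Fin.castSucc_lt_succ_iff, Fin.castSucc_lt_castSucc_iff]
  grind

theorem surjOn_edgeDiff_prefixVector :
    Set.SurjOn (edgeDiff (prefixVector K N)) Sym2.diagSetᶜ (segmentVectors K N) := by
  rintro _ ⟨a, b, hab, rfl⟩
  have hlt : a.castSucc < b.succ := Fin.castSucc_lt_succ_iff.mpr hab
  exact ⟨s(a.castSucc, b.succ), by simpa using hlt.ne,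
    by rw [edgeDiff_mk_of_le _ hlt.le, prefixVector_succ_sub_castSucc hab]⟩

theorem Cseg_subset_segmentVectors : Cseg N ⊆ segmentVectors (ZMod 2) N := by
  rintro v ⟨hv, a, b, hab⟩
  obtain ⟨k, hk⟩ := Function.ne_iff.mp hv
  have hk := (hab k).mp (Fin.eq_one_of_ne_zero _ hk)
  refine ⟨⟨a, by lia⟩, ⟨min b N - 1, by lia⟩, Fin.mk_le_mk.mpr (by lia), funext fun l => ?_⟩
  have hl : v l = 1 ↔ l ∈ Set.Icc ⟨a, by lia⟩ ⟨min b N - 1, by lia⟩ := by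
    rw [hab l, Set.mem_Icc, Fin.le_def, Fin.le_def]
    dsimp only
    lia
  by_cases h : v l = 1
  · rw [Set.indicator_of_mem (hl.mp h), h, Pi.one_apply]
  · rw [Set.indicator_of_notMem (mt hl.mpr h)]
    exact by_contra fun h0 => h (Fin.eq_one_of_ne_zero _ h0)

end SegmentVectors

theorem stmt12_general {K : Type*} [DivisionRing K] {N : ℕ} {S : Set (Fin N → K)}
    (hS : S ⊆ segmentVectors K N) :
    ∃ (G : SimpleGraph (Fin (N + 1))) (ψ : (Fin N → K) → Sym2 (Fin (N + 1))),
      Set.BijOn ψ S G.edgeSet ∧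
        ∀ X ⊆ S, LinearIndepOn K id X ↔ (SimpleGraph.fromEdgeSet (ψ '' X)).IsAcyclic := by
  let χ := edgeDiff (prefixVector K N)
  let ψ := Function.invFunOn χ Sym2.diagSetᶜ
  have hsurj : ∀ X ⊆ S, Set.SurjOn χ Sym2.diagSetᶜ X := fun X hX =>
    surjOn_edgeDiff_prefixVector.mono subset_rfl (hX.trans hS)
  have hedges : ∀ X ⊆ S, (SimpleGraph.fromEdgeSet (ψ '' X)).edgeSet = ψ '' X := fun X hX => by
    rw [SimpleGraph.edgeSet_fromEdgeSet, sdiff_eq_left, ← Set.subset_compl_iff_disjoint_right]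
    exact (hsurj X hX).mapsTo_invFunOn.image_subset
  refine ⟨SimpleGraph.fromEdgeSet (ψ '' S), ψ, ?_, fun X hX => ?_⟩
  · rw [hedges S subset_rfl]
    exact (hsurj S subset_rfl).rightInvOn_invFunOn.injOn.bijOn_image
  · have hχ : Set.BijOn χ (ψ '' X) X := (hsurj X hX).bijOn_subset
    rw [← linearIndepOn_edgeDiff_iff_isAcyclic (affineIndependent_prefixVector K N), hedges X hX,
      linearIndepOn_iff_image hχ.injOn, hχ.image_eq]

theorem stmt12 (n : ℕ) (hn : 2 ≤ n) (S : Finset (Fin (n - 1) → ZMod 2))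
    (hS : ↑S ⊆ Cseg (n - 1)) :
    ∃ (G : SimpleGraph (Fin n)) (ψ : (Fin (n - 1) → ZMod 2) → Sym2 (Fin n)),
      Set.BijOn ψ ↑S G.edgeSet ∧
        ∀ X : Set (Fin (n - 1) → ZMod 2), X ⊆ ↑S →
          (LinearIndependent (ZMod 2) ((↑) : X → (Fin (n - 1) → ZMod 2)) ↔
            (SimpleGraph.fromEdgeSet (ψ '' X)).IsAcyclic) := by
  obtain ⟨N, rfl⟩ : ∃ N, n = N + 1 := ⟨n - 1, by lia⟩
  exact stmt12_general (hS.trans Cseg_subset_segmentVectors)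
end

section
/- Let n ≥ 2 and let a = {i,j} and b = {r,s} be two distinct unordered pairs of distinct vertices in Fin n. Then χ(a) + χ(b) ∈ C(n-1) if and only if the intersection {i,j} ∩ {r,s} has exactly one element; moreover, in that case χ(a) + χ(b) = χ({x,y}), where {x,y} is the symmetric difference of {i,j} and {r,s}. -/
/-!
For a set `S` of vertices, let the cut vector of `S` record, at each gap between consecutive
vertices, the parity of the number of elements of `S` above the gap. It turns symmetric differences
into sums, equals `χ(e)` on a pair `e`, and is injective on sets of even size: just below the
largest element of a nonempty even set the parity is odd. Hence `χ(a) + χ(b)` is the cut vector of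
`a ∆ b`, which is the coding vector of a pair exactly when `a ∆ b` has two elements; since
`|a ∆ b| + 2 |a ∩ b| = 4`, this says `|a ∩ b| = 1`.
-/

open Finset
open scoped symmDiff

section Parity

variable {α : Type*} [DecidableEq α]

theorem card_symmDiff_add_two_mul_card_inter (S T : Finset α) :
    #(S ∆ T) + 2 * #(S ∩ T) = #S + #T := by
  have hdisj : Disjoint (S \ T) (T \ S) := disjoint_sdiff_sdiff
  have hS : #(S \ T) + #(S ∩ T) = #S := card_sdiff_add_card_inter S T
  have hT : #(T \ S) + #(S ∩ T) = #T := inter_comm S T ▸ card_sdiff_add_card_inter T S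
  rw [symmDiff_def, sup_eq_union, card_union_of_disjoint hdisj]
  omega

theorem cast_card_symmDiff (S T : Finset α) :
    (#(S ∆ T) : ZMod 2) = #S + #T := by
  have hcard := congrArg (Nat.cast : ℕ → ZMod 2) (card_symmDiff_add_two_mul_card_inter S T)
  have htwo : (2 : ZMod 2) = 0 := rfl
  simpa only [Nat.cast_add, Nat.cast_mul, Nat.cast_ofNat, htwo, zero_mul, add_zero] using hcard

theorem even_card_symmDiff {S T : Finset α} (hS : Even #S) (hT : Even #T) :
    Even #(S ∆ T) := by
  rw [← ZMod.natCast_eq_zero_iff_even, cast_card_symmDiff, hS.natCast_zmod_two,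
    hT.natCast_zmod_two, add_zero]

theorem even_card_pair {a b : α} (hab : a ≠ b) :
    Even #({a, b} : Finset α) :=
  card_pair hab ▸ even_two

end Parity

section CutVector

variable {n : ℕ}

/-- The extension of `chi` from pairs to arbitrary sets of vertices: the `k`-th coordinate is the
parity of the number of elements of `S` above the cut between `k` and `k + 1`. -/
def cutVector (S : Finset (Fin n)) : Fin (n - 1) → ZMod 2 :=
  fun k => #{i ∈ S | k.val < i.val}

theorem cutVector_symmDiff (S T : Finset (Fin n)) :
    cutVector (S ∆ T) = cutVector S + cutVector T := by
  funext k
  have hfilter : {i ∈ S ∆ T | k.val < i.val} =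
      {i ∈ S | k.val < i.val} ∆ {i ∈ T | k.val < i.val} := by
    ext i
    simp only [mem_filter, mem_symmDiff]
    tauto
  simp only [cutVector, Pi.add_apply, hfilter, cast_card_symmDiff]

theorem eq_empty_of_cutVector_eq_zero {S : Finset (Fin n)} (hS : Even #S)
    (h : cutVector S = 0) : S = ∅ := by
  by_contra hne
  obtain ⟨m, hm, hmax⟩ := exists_max_image S Fin.val (nonempty_iff_ne_empty.mpr hne)
  by_cases hm0 : m.val = 0
  · have hS_eq : S = {m} := by
      refine eq_singleton_iff_unique_mem.mpr ⟨hm, fun i hi => Fin.ext ?_⟩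
      have := hmax i hi
      omega
    simp [hS_eq] at hS
  · have hfilter : {i ∈ S | m.val - 1 < i.val} = {m} := by
      refine eq_singleton_iff_unique_mem.mpr
        ⟨mem_filter.mpr ⟨hm, by omega⟩, fun i hi => Fin.ext ?_⟩
      have := hmax i (mem_filter.mp hi).1
      have := (mem_filter.mp hi).2
      omega
    have hcoord := congrFun h ⟨m.val - 1, by omega⟩
    simp [cutVector, hfilter] at hcoord

theorem cutVector_injOn : Set.InjOn cutVector {S : Finset (Fin n) | Even #S} := by
  intro S hS T hT h
  refine symmDiff_eq_bot.mp (eq_empty_of_cutVector_eq_zero (even_card_symmDiff hS hT) ?_)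
  rw [cutVector_symmDiff, h, ZModModule.add_self]

theorem chi_apply_s16 (i j : Fin n) (k : Fin (n - 1)) :
    chi n s(i, j) k = if min i.val j.val ≤ k.val ∧ k.val < max i.val j.val then 1 else 0 :=
  rfl

theorem chi_apply_eq_one_iff (i j : Fin n) (k : Fin (n - 1)) :
    chi n s(i, j) k = 1 ↔ min i.val j.val ≤ k.val ∧ k.val < max i.val j.val := by
  simp only [chi_apply_s16, ite_eq_left_iff, zero_ne_one, imp_false, not_not]

theorem chi_eq_cutVector {i j : Fin n} (hij : i ≠ j) : chi n s(i, j) = cutVector {i, j} := by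
  funext k
  have htwo : (2 : ZMod 2) = 0 := rfl
  simp only [chi_apply_s16, cutVector, filter_insert, filter_singleton]
  split_ifs <;> first | omega | simp [hij, htwo]

theorem exists_eq_chi_of_mem_Cseg {v : Fin (n - 1) → ZMod 2} (hv : v ∈ Cseg (n - 1)) :
    ∃ i j : Fin n, i ≠ j ∧ v = chi n s(i, j) := by
  obtain ⟨hne, a, b, hsupp⟩ := hv
  obtain ⟨k, hk⟩ := Function.ne_iff.mp hne
  have hkab : a ≤ k.val ∧ k.val < b := (hsupp k).mp (Fin.eq_one_of_ne_zero _ hk)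
  -- The witness `b` of `Cseg` may lie beyond the last vertex.
  refine ⟨⟨a, by omega⟩, ⟨min b (n - 1), by omega⟩, Fin.ne_of_val_ne (by dsimp only; omega), ?_⟩
  funext l
  have heq_of_eq_one_iff : ∀ x y : ZMod 2, (x = 1 ↔ y = 1) → x = y := by decide
  apply heq_of_eq_one_iff
  rw [hsupp, chi_apply_eq_one_iff]
  dsimp only
  omega

theorem chi_mem_Cseg {i j : Fin n} (hij : i ≠ j) : chi n s(i, j) ∈ Cseg (n - 1) := by
  refine ⟨fun h => ?_, min i.val j.val, max i.val j.val, chi_apply_eq_one_iff i j⟩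
  rw [chi_eq_cutVector hij] at h
  exact insert_ne_empty _ _ (eq_empty_of_cutVector_eq_zero (even_card_pair hij) h)

theorem cutVector_mem_Cseg_iff {S : Finset (Fin n)} (hS : Even #S) :
    cutVector S ∈ Cseg (n - 1) ↔ #S = 2 := by
  rw [card_eq_two]
  constructor
  · intro hmem
    obtain ⟨i, j, hij, hSij⟩ := exists_eq_chi_of_mem_Cseg hmem
    rw [chi_eq_cutVector hij] at hSij
    exact ⟨i, j, hij, cutVector_injOn hS (even_card_pair hij) hSij⟩
  · rintro ⟨i, j, hij, rfl⟩
    exact chi_eq_cutVector hij ▸ chi_mem_Cseg hij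

end CutVector

theorem stmt16 (n : ℕ) (hn : 2 ≤ n) (i j r s : Fin n)
    (hij : i ≠ j) (hrs : r ≠ s) (hab : s(i, j) ≠ s(r, s)) :
    ((chi n s(i, j) + chi n s(r, s) ∈ Cseg (n - 1)) ↔
        (({i, j} ∩ {r, s} : Finset (Fin n)).card = 1)) ∧
      (({i, j} ∩ {r, s} : Finset (Fin n)).card = 1 →
        ∀ x y : Fin n, ({x, y} : Finset (Fin n)) = symmDiff ({i, j} : Finset (Fin n)) {r, s} →
          chi n s(i, j) + chi n s(r, s) = chi n s(x, y)) := by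
  have hcard := card_symmDiff_add_two_mul_card_inter {i, j} {r, s}
  rw [card_pair hij, card_pair hrs] at hcard
  have hcard_iff : #({i, j} ∆ {r, s}) = 2 ↔ #({i, j} ∩ {r, s}) = 1 := by omega
  have heven : Even #({i, j} ∆ {r, s}) :=
    even_card_symmDiff (even_card_pair hij) (even_card_pair hrs)
  rw [chi_eq_cutVector hij, chi_eq_cutVector hrs, ← cutVector_symmDiff]
  refine ⟨(cutVector_mem_Cseg_iff heven).trans hcard_iff, fun hinter x y hxy => ?_⟩
  have hne : x ≠ y := card_pair_eq_two_iff.mp (hxy ▸ hcard_iff.mpr hinter)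
  rw [← hxy, chi_eq_cutVector hne]
end
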